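/- arXiv:1007.1178 — 2 statements merged into one kernel-verified Lean document; each statement's English description precedes it below -/
import Mathlib

section
/- If G is a finite simple graph with T(G) isomorphic to the 7-sun S₇, then G has exactly 14 edges and G contains no subgraph isomorphic to the n-wheel W_n for any n with 4 ≤ n ≤ 6. -/
/-!
The edges at a vertex `v` of `G` form in `T(G)` a copy of the graph induced on the neighbours of
`v`, so the hub of an `n`-wheel in `G` produces an `n`-cycle in `T(G)`. On the other hand, a sun
with one of its cycle vertices deleted is a path of triangles, consecutive ones sharing a vertex:
all its cycles are triangles. So a longer cycle in the `k`-sun passes through all `k` cycle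
vertices, and there is no such cycle of length less than `k`.
-/

open SimpleGraph

/-- The triangular line graph `T(G)` of a graph `G`: vertices are the edges of `G`,
with two edges adjacent iff they share an endpoint and lie in a common triangle. -/
def TriLine {V : Type*} (G : SimpleGraph V) : SimpleGraph G.edgeSet where
  Adj e₁ e₂ := ∃ u v w : V, G.Adj u v ∧ G.Adj v w ∧ G.Adj u w ∧
      (e₁ : Sym2 V) = s(u, v) ∧ (e₂ : Sym2 V) = s(v, w)
  symm := by
    refine ⟨?_⟩
    rintro e₁ e₂ ⟨u, v, w, huv, hvw, huw, h₁, h₂⟩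
    exact ⟨w, v, u, hvw.symm, huv.symm, huw.symm, by rw [h₂]; exact Sym2.eq_swap,
      by rw [h₁]; exact Sym2.eq_swap⟩
  loopless := by
    refine ⟨?_⟩
    rintro e ⟨u, v, w, huv, hvw, huw, h₁, h₂⟩
    rw [h₁, Sym2.eq_iff] at h₂
    rcases h₂ with ⟨h, _⟩ | ⟨h, _⟩
    · exact huv.ne h
    · exact huw.ne h

/-- `H` is a triangular line graph: it is isomorphic to `T(G)` for some finite graph `G`. -/
def IsTriLineGraph {W : Type*} (H : SimpleGraph W) : Prop :=
  ∃ (V : Type) (_ : Fintype V) (G : SimpleGraph V), Nonempty (TriLine G ≃g H)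

/-- Given a preimage `G` of `H` (via the isomorphism `f : T(G) ≃g H`) and a set `S` of
vertices of `H`, this is the subgraph of `G` consisting of the edges of `G` corresponding
to the vertices in `S` (together with their endpoints); i.e. `T⁻¹(S)`. -/
def edgePre {V W : Type*} (G : SimpleGraph V) {H : SimpleGraph W}
    (f : TriLine G ≃g H) (S : Set W) : G.Subgraph where
  verts := {v | ∃ (u : V) (e : G.edgeSet), (e : Sym2 V) = s(v, u) ∧ (f e : W) ∈ S}
  Adj a b := G.Adj a b ∧ ∃ e : G.edgeSet, (e : Sym2 V) = s(a, b) ∧ (f e : W) ∈ S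
  adj_sub h := h.1
  edge_vert := by
    rintro a b ⟨h, e, he, hS⟩
    exact ⟨b, e, he, hS⟩
  symm := by
    refine ⟨?_⟩
    rintro a b ⟨h, e, he, hS⟩
    exact ⟨h.symm, e, he.trans Sym2.eq_swap, hS⟩

/-- `A` occurs as a (not necessarily induced) subgraph of `B`. -/
def HasSubgraphIso {α β : Type*} (A : SimpleGraph α) (B : SimpleGraph β) : Prop :=
  ∃ f : α → β, Function.Injective f ∧ ∀ a b, A.Adj a b → B.Adj (f a) (f b)

/-- Glue a graph along an identification relation `R`: the quotient graph on
the quotient of the vertex set by the equivalence generated by `R`. -/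
def Glue {ι : Type*} (G : SimpleGraph ι) (R : ι → ι → Prop) :
    SimpleGraph (Quotient (Relation.EqvGen.setoid R)) :=
  SimpleGraph.fromRel (fun x y => ∃ a b : ι, G.Adj a b ∧ x = Quotient.mk _ a ∧ y = Quotient.mk _ b)

/-- The `k`-wheel: a `k`-cycle plus a dominating center vertex (`none`). -/
def wheelGraph (k : ℕ) : SimpleGraph (Option (ZMod k)) :=
  SimpleGraph.fromRel (fun a b =>
    (∃ i : ZMod k, a = some i ∧ b = some (i + 1)) ∨ (a = none ∧ b ≠ none))

/-- The squared `k`-cycle: a `k`-cycle plus edges between vertices at distance two. -/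
def squaredCycleGraph (k : ℕ) : SimpleGraph (ZMod k) :=
  SimpleGraph.fromRel (fun i j => j = i + 1 ∨ j = i + 2)

/-- The `k`-sun: a `k`-cycle (the `Sum.inl` vertices), with a new vertex (`Sum.inr i`)
for each cycle edge `{i, i+1}`, adjacent to both its endpoints. -/
def sunGraph (k : ℕ) : SimpleGraph (ZMod k ⊕ ZMod k) :=
  SimpleGraph.fromRel (fun a b => ∃ i : ZMod k,
    (a = Sum.inl i ∧ b = Sum.inl (i + 1)) ∨
    (a = Sum.inr i ∧ b = Sum.inl i) ∨
    (a = Sum.inr i ∧ b = Sum.inl (i + 1)))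

theorem hasSubgraphIso_iff_isContained {α β : Type*} {A : SimpleGraph α} {B : SimpleGraph β} :
    HasSubgraphIso A B ↔ A ⊑ B :=
  ⟨fun ⟨f, hf, hadj⟩ => ⟨⟨f, hadj _ _⟩, hf⟩,
    fun ⟨f⟩ => ⟨f, f.injective, fun _ _ h => f.toHom.map_adj h⟩⟩

section NeighborSet

variable {V : Type*} (G : SimpleGraph V)

theorem induce_neighborSet_isContained_triLine (v : V) :
    G.induce (G.neighborSet v) ⊑ TriLine G := by
  refine ⟨⟨⟨fun x => ⟨s(v, x), x.2⟩, fun {x y} hxy => ?_⟩, fun x y hxy => ?_⟩⟩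
  · exact ⟨x, v, y, x.2.symm, y.2, hxy, Sym2.eq_swap, rfl⟩
  · exact Subtype.ext (Sym2.congr_right.mp (congrArg Subtype.val hxy))

variable {G}

theorem exists_circulantGraph_isContained_induce_neighborSet {n : ℕ} (hW : wheelGraph n ⊑ G) :
    ∃ v, circulantGraph ({1} : Set (ZMod n)) ⊑ G.induce (G.neighborSet v) := by
  obtain ⟨f⟩ := hW
  have spoke (i : ZMod n) : G.Adj (f none) (f (some i)) :=
    f.toHom.map_adj (by simp [wheelGraph])
  have rim {i j : ZMod n} (hij : (circulantGraph {1}).Adj i j) :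
      G.Adj (f (some i)) (f (some j)) := by
    refine f.toHom.map_adj ?_
    rw [wheelGraph, fromRel_adj]
    obtain ⟨hne, h | h⟩ := hij
    · exact ⟨by simpa using hne, .inr (.inl ⟨j, rfl, by rw [← eq_add_of_sub_eq' h]⟩)⟩
    · exact ⟨by simpa using hne, .inl (.inl ⟨i, rfl, by rw [← eq_add_of_sub_eq' h]⟩)⟩
  refine ⟨f none, ⟨⟨fun i => ⟨f (some i), spoke i⟩, rim⟩, fun i j hij => ?_⟩⟩
  exact Option.some.inj (f.injective (congrArg Subtype.val hij))

end NeighborSet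

theorem zmod_natCast_ne_zero {n m : ℕ} (hm : 0 < m) (hmn : m < n) : (m : ZMod n) ≠ 0 := by
  rw [Ne, ZMod.natCast_eq_zero_iff]
  exact Nat.not_dvd_of_pos_of_lt hm hmn

theorem zmod_val_add_one {k : ℕ} [NeZero k] {a : ZMod k} (ha : a + 1 ≠ 0) :
    (a + 1).val = a.val + 1 := by
  have hcast : ((a.val + 1 : ℕ) : ZMod k) = a + 1 := by simp
  have hne : a.val + 1 ≠ k := fun h => ha (by rw [← hcast, h, ZMod.natCast_self])
  have hlt := a.val_lt
  rw [← hcast, ZMod.val_cast_of_lt (by lia)]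

section Sun

variable {k : ℕ}

theorem eq_of_sunGraph_adj_inl {i : ZMod k} {b : ZMod k ⊕ ZMod k}
    (h : (sunGraph k).Adj (.inl i) b) :
    b = .inl (i + 1) ∨ b = .inr i ∨ b = .inl (i - 1) ∨ b = .inr (i - 1) := by
  rw [sunGraph, fromRel_adj] at h
  grind

theorem sunGraph_adj_inr_iff {i : ZMod k} {b : ZMod k ⊕ ZMod k} :
    (sunGraph k).Adj (.inr i) b ↔ b = .inl i ∨ b = .inl (i + 1) := by
  rw [sunGraph, fromRel_adj]
  grind

/-- The position of a vertex along the path of triangles obtained from the `k`-sun by cutting it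
open at the cycle vertex `j`, counted as `inl j, inr j, inl (j + 1), inr (j + 1), …`. -/
def sunHeight (j : ZMod k) : ZMod k ⊕ ZMod k → ℕ
  | .inl i => 2 * (i - j).val
  | .inr i => 2 * (i - j).val + 1

variable [NeZero k] {i j : ZMod k} {b : ZMod k ⊕ ZMod k}

theorem sunHeight_inl_add_one (h : i + 1 ≠ j) :
    sunHeight j (.inl (i + 1)) = sunHeight j (.inl i) + 2 := by
  have hval := zmod_val_add_one (a := i - j) (by rwa [sub_add_eq_add_sub, sub_ne_zero])
  rw [sunHeight, sunHeight, ← sub_add_eq_add_sub, hval]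
  ring

theorem eq_of_sunGraph_adj_inl_of_sunHeight_le (h : (sunGraph k).Adj (.inl i) b)
    (hb : b ≠ .inl j) (hle : sunHeight j b ≤ sunHeight j (.inl i)) :
    b = .inl (i - 1) ∨ b = .inr (i - 1) := by
  obtain rfl | rfl | hb' := eq_of_sunGraph_adj_inl h
  · rw [sunHeight_inl_add_one (by simpa using hb)] at hle
    lia
  · simp [sunHeight] at hle
  · exact hb'

theorem eq_of_sunGraph_adj_inr_of_sunHeight_le (h : (sunGraph k).Adj (.inr i) b)
    (hb : b ≠ .inl j) (hle : sunHeight j b ≤ sunHeight j (.inr i)) : b = .inl i := by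
  obtain rfl | rfl := sunGraph_adj_inr_iff.mp h
  · rfl
  · rw [sunHeight_inl_add_one (by simpa using hb)] at hle
    simp [sunHeight] at hle

end Sun

section Cycle

variable {k n : ℕ} [NeZero k]

theorem exists_eq_inl_of_copy_circulantGraph (hn : 4 ≤ n)
    (g : Copy (circulantGraph ({1} : Set (ZMod n))) (sunGraph k)) (j : ZMod k) :
    ∃ x, g x = .inl j := by
  by_contra! hj
  have : NeZero n := ⟨by lia⟩
  have h1 : (1 : ZMod n) ≠ 0 := mod_cast zmod_natCast_ne_zero (n := n) one_pos (by lia)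
  have h2 : (2 : ZMod n) ≠ 0 := mod_cast zmod_natCast_ne_zero (n := n) two_pos (by lia)
  have h3 : (3 : ZMod n) ≠ 0 := mod_cast zmod_natCast_ne_zero (n := n) three_pos (by lia)
  have adj_succ (x : ZMod n) : (sunGraph k).Adj (g x) (g (x + 1)) :=
    g.toHom.map_adj (by simp [h1])
  have adj_pred (x : ZMod n) : (sunGraph k).Adj (g x) (g (x - 1)) :=
    (sub_add_cancel x 1 ▸ adj_succ (x - 1)).symm
  -- Both neighbours of a highest vertex of the cycle lie below it, so they are `inl (i - 1)` and
  -- `inr (i - 1)` for some `i`, and the cycle closes up as a triangle.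
  obtain ⟨m, hm⟩ := Finite.exists_max (fun x => sunHeight j (g x))
  have hne : g (m + 1) ≠ g (m - 1) := g.injective.ne fun h => h2 (by linear_combination h)
  cases hgm : g m with
  | inr i =>
    have below {x : ZMod n} (hx : (sunGraph k).Adj (g m) (g x)) : g x = .inl i :=
      eq_of_sunGraph_adj_inr_of_sunHeight_le (hgm ▸ hx) (hj x) (hgm ▸ hm x)
    exact hne ((below (adj_succ m)).trans (below (adj_pred m)).symm)
  | inl i =>
    have below {x : ZMod n} (hx : (sunGraph k).Adj (g m) (g x)) :
        g x = .inl (i - 1) ∨ g x = .inr (i - 1) :=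
      eq_of_sunGraph_adj_inl_of_sunHeight_le (hgm ▸ hx) (hj x) (hgm ▸ hm x)
    have triangle {x y z : ZMod n} (hx : g x = .inr (i - 1)) (hy : g y = .inl (i - 1))
        (hxz : (sunGraph k).Adj (g x) (g z)) : z = y ∨ z = m := by
      rw [hx, sunGraph_adj_inr_iff, sub_add_cancel, ← hy, ← hgm] at hxz
      exact hxz.imp (g.injective ·) (g.injective ·)
    obtain hs | hs := below (adj_succ m) <;> obtain hp | hp := below (adj_pred m)
    · exact hne (hs.trans hp.symm)
    · obtain h | h := triangle hp hs (adj_pred (m - 1))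
      · exact h3 (by linear_combination -h)
      · exact h2 (by linear_combination -h)
    · obtain h | h := triangle hs hp (adj_succ (m + 1))
      · exact h3 (by linear_combination h)
      · exact h2 (by linear_combination h)
    · exact hne (hs.trans hp.symm)

theorem le_of_circulantGraph_isContained_sunGraph (hn : 4 ≤ n)
    (h : circulantGraph ({1} : Set (ZMod n)) ⊑ sunGraph k) : k ≤ n := by
  obtain ⟨g⟩ := h
  have : NeZero n := ⟨by lia⟩
  choose x hx using exists_eq_inl_of_copy_circulantGraph hn g
  have hx_inj : Function.Injective x := fun i j hij =>
    Sum.inl_injective (by rw [← hx i, ← hx j, hij])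
  simpa only [ZMod.card] using Fintype.card_le_of_injective x hx_inj

end Cycle

theorem preimage_of_sevenSun_card_edges_general {V : Type*} {k : ℕ} [NeZero k]
    (G : SimpleGraph V) (h : Nonempty (TriLine G ≃g sunGraph k)) :
    Nat.card G.edgeSet = 2 * k ∧
      ∀ n : ℕ, 4 ≤ n → n < k → ¬ HasSubgraphIso (wheelGraph n) G := by
  obtain ⟨F⟩ := h
  refine ⟨?_, fun n hn hnk hW => ?_⟩
  · rw [Nat.card_congr F.toEquiv, Nat.card_sum, Nat.card_zmod, two_mul]
  · obtain ⟨v, hv⟩ := exists_circulantGraph_isContained_induce_neighborSet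
      (hasSubgraphIso_iff_isContained.mp hW)
    have hcycle : circulantGraph ({1} : Set (ZMod n)) ⊑ sunGraph k :=
      (hv.trans (induce_neighborSet_isContained_triLine G v)).trans F.isContained
    exact hnk.not_ge (le_of_circulantGraph_isContained_sunGraph hn hcycle)

/-- A preimage of the 7-sun has exactly 14 edges and contains no `n`-wheel with
`4 ≤ n ≤ 6` as a subgraph. -/
theorem preimage_of_sevenSun_card_edges {V : Type} [Fintype V] (G : SimpleGraph V)
    (h : Nonempty (TriLine G ≃g sunGraph 7)) :
    Nat.card G.edgeSet = 14 ∧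
      ∀ n : ℕ, 4 ≤ n → n ≤ 6 → ¬ HasSubgraphIso (wheelGraph n) G := by
  obtain ⟨hcard, hwheel⟩ := preimage_of_sevenSun_card_edges_general G h
  exact ⟨hcard, fun n h4 h6 => hwheel n h4 (by lia)⟩
end

section
/- Let φ be a Boolean formula in conjunctive normal form with clauses of size three, and let G_φ be the graph constructed from φ by forming a variable cluster (with a wire of length 2m+1) for each variable and combining these clusters via the clause gadgets for the clauses. Then every edge of G_φ lies in exactly one triangle of G_φ. -/
open SimpleGraph

/-- Vertex type of a 7-sun: `Sum.inl i` are the cycle vertices `cᵢ`, and `Sum.inr i` is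
the degree-two vertex `pᵢ` attached to the cycle edge `{cᵢ, cᵢ₊₁}`. -/
abbrev SunV : Type := ZMod 7 ⊕ ZMod 7

/-- Vertex type of the binary-enforced `k`-sun: cycle vertices `vᵢ` (`inl i`), sun
pendant vertices `pᵢ` (`inr (inl i)`), new cycle vertices `x_{i,t}`
(`inr (inr (inl (i, t)))`) and new pendant vertices `q_{i,t}` (`inr (inr (inr (i, t)))`). -/
abbrev BSV (k : ℕ) : Type := ZMod k ⊕ ZMod k ⊕ (ZMod k × Fin 2) ⊕ (ZMod k × Fin 3)

/-- The binary-enforced `k`-sun `S_k^b`: a `k`-sun together with, for each `i`, a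
sequence of three triangles between `v_{i+4}` and `v_i`, forming a 7-sun together with
the four consecutive sun triangles from `v_i` to `v_{i+4}`. -/
def binarySun (k : ℕ) : SimpleGraph (BSV k) :=
  SimpleGraph.fromRel (fun a b => ∃ i : ZMod k,
    (a = Sum.inl i ∧ b = Sum.inl (i + 1)) ∨
    (a = Sum.inr (Sum.inl i) ∧ (b = Sum.inl i ∨ b = Sum.inl (i + 1))) ∨
    (a = Sum.inl (i + 4) ∧ b = Sum.inr (Sum.inr (Sum.inl (i, 0)))) ∨
    (a = Sum.inr (Sum.inr (Sum.inl (i, 0))) ∧ b = Sum.inr (Sum.inr (Sum.inl (i, 1)))) ∨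
    (a = Sum.inr (Sum.inr (Sum.inl (i, 1))) ∧ b = Sum.inl i) ∨
    (a = Sum.inr (Sum.inr (Sum.inr (i, 0))) ∧
      (b = Sum.inl (i + 4) ∨ b = Sum.inr (Sum.inr (Sum.inl (i, 0))))) ∨
    (a = Sum.inr (Sum.inr (Sum.inr (i, 1))) ∧
      (b = Sum.inr (Sum.inr (Sum.inl (i, 0))) ∨ b = Sum.inr (Sum.inr (Sum.inl (i, 1))))) ∨
    (a = Sum.inr (Sum.inr (Sum.inr (i, 2))) ∧
      (b = Sum.inr (Sum.inr (Sum.inl (i, 1))) ∨ b = Sum.inl i)))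

/-- Vertex type of a variable cluster: the wire suns `H_x = H_{x,0}, H_{x,1}, …,
H_{x,2m}` (`inl`), and the large variable gadgets (binary-enforced 12-suns)
`V_{x,1}, …, V_{x,2m}` (`inr`, where index `j : Fin (2m)` stands for `V_{x,j+1}`). -/
abbrev ClusterV (m : ℕ) : Type := (Fin (2 * m + 1) × SunV) ⊕ (Fin (2 * m) × BSV 12)

/-- Disjoint union of the wire 7-suns and the binary-enforced 12-suns. -/
def clusterBase (m : ℕ) : SimpleGraph (ClusterV m) :=
  SimpleGraph.fromRel (fun a b =>
    (∃ (i : Fin (2 * m + 1)) (x y : SunV), (sunGraph 7).Adj x y ∧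
      a = Sum.inl (i, x) ∧ b = Sum.inl (i, y)) ∨
    (∃ (j : Fin (2 * m)) (x y : BSV 12), (binarySun 12).Adj x y ∧
      a = Sum.inr (j, x) ∧ b = Sum.inr (j, y)))

/-- The identifications of a variable cluster: (1) the wire NOT gadgets joining the ROOT
bowtie of `H_{x,i+1}` to `H_{x,i}`, and (2) for each `j`, the EQUAL gadget joining the
EQUAL bowtie `{c₂,c₃,c₄,p₂,p₃}` (center `c₃`) of `H_{x,j+1}` to the bowtie
`{x_{0,0}, x_{0,1}, v₀, q_{0,1}, q_{0,2}}` (center `x_{0,1}`) of the labeled 7-sun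
`H'_{x,j+1}` of the binary-enforced 12-sun `V_{x,j+1}`. -/
def clusterRel (m : ℕ) : ClusterV m → ClusterV m → Prop := fun x y =>
  (∃ i : Fin (2 * m),
    (x = Sum.inl (i.castSucc, Sum.inl 5) ∧ y = Sum.inl (i.succ, Sum.inl 1)) ∨
    (x = Sum.inl (i.castSucc, Sum.inl 4) ∧ y = Sum.inl (i.succ, Sum.inl 0)) ∨
    (x = Sum.inl (i.castSucc, Sum.inr 4) ∧ y = Sum.inl (i.succ, Sum.inr 0)) ∨
    (x = Sum.inl (i.castSucc, Sum.inr 5) ∧ y = Sum.inl (i.succ, Sum.inl 2)) ∨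
    (x = Sum.inl (i.castSucc, Sum.inl 6) ∧ y = Sum.inl (i.succ, Sum.inr 1))) ∨
  (∃ j : Fin (2 * m),
    (x = Sum.inl (j.succ, Sum.inl 3) ∧
      y = Sum.inr (j, Sum.inr (Sum.inr (Sum.inl (0, 1))))) ∨
    (x = Sum.inl (j.succ, Sum.inl 2) ∧
      y = Sum.inr (j, Sum.inr (Sum.inr (Sum.inr (0, 1))))) ∨
    (x = Sum.inl (j.succ, Sum.inr 2) ∧
      y = Sum.inr (j, Sum.inr (Sum.inr (Sum.inl (0, 0))))) ∨
    (x = Sum.inl (j.succ, Sum.inl 4) ∧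
      y = Sum.inr (j, Sum.inr (Sum.inr (Sum.inr (0, 2))))) ∨
    (x = Sum.inl (j.succ, Sum.inr 3) ∧ y = Sum.inr (j, Sum.inl 0)))

/-- The variable cluster: the wire of `2m+1` 7-suns with the `2m` large variable gadgets
attached via EQUAL gadgets. -/
def clusterGraph (m : ℕ) : SimpleGraph (Quotient (Relation.EqvGen.setoid (clusterRel m))) :=
  Glue (clusterBase m) (clusterRel m)

/-- The vertices of the cluster coming from the wire 7-sun `H_{x,i}`. -/
def clusterWireVerts (m : ℕ) (i : Fin (2 * m + 1)) :
    Set (Quotient (Relation.EqvGen.setoid (clusterRel m))) :=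
  Set.range (fun v : SunV => Quotient.mk _ (Sum.inl (i, v)))

/-- The vertices of the cluster coming from the large variable gadget `V_{x,j+1}`. -/
def clusterGadgetVerts (m : ℕ) (j : Fin (2 * m)) :
    Set (Quotient (Relation.EqvGen.setoid (clusterRel m))) :=
  Set.range (fun v : BSV 12 => Quotient.mk _ (Sum.inr (j, v)))


/-- A 3-CNF formula: `m` clauses, each a triple of literals, where a literal is a
variable index together with a polarity (`true` = positive, `false` = negated). -/
def ClauseFun (n m : ℕ) : Type := Fin m → Fin 3 → Fin n × Bool

/-- The formula is satisfiable: some truth assignment makes a literal of every clause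
true. -/
def Satisfiable {n m : ℕ} (φ : ClauseFun n m) : Prop :=
  ∃ σ : Fin n → Bool, ∀ j : Fin m, ∃ l : Fin 3, σ (φ j l).1 = (φ j l).2

/-- The index (in `Fin (2m)`, standing for labels `1, …, 2m`) of the large variable
gadget used by clause `j` for a literal of polarity `b`: label `2(j+1)` for a positive
literal and `2(j+1) - 1` for a negated one. -/
def gadgetIdx (m : ℕ) (j : Fin m) (b : Bool) : Fin (2 * m) :=
  ⟨2 * (j : ℕ) + (if b then 1 else 0), by have := j.isLt; split <;> omega⟩

/-- `n` disjoint variable clusters, one for each variable. -/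
def phiBase (n m : ℕ) : SimpleGraph (Fin n × ClusterV m) :=
  SimpleGraph.fromRel (fun a b => a.1 = b.1 ∧ (clusterBase m).Adj a.2 b.2)

/-- All identifications of `G_φ`: the internal identifications of each variable cluster,
together with, for each clause `j`, the clause-gadget identifications joining the three
12-suns of the large variable gadgets `V_{x_{i_ℓ}, k_ℓ}`: in each such 12-sun take the
triangles `⟨a₁, a₂, a₃⟩ = ⟨v₁, v₂, p₁⟩` and `⟨b₁, b₂, b₃⟩ = ⟨v₇, v₈, p₇⟩` at maximum
distance and identify `a_{ℓ,1} = b_{ℓ+1,1}`, `a_{ℓ,2} = b_{ℓ+1,3}`,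
`a_{ℓ,3} = b_{ℓ+1,2}` with subscripts mod 3. -/
def phiRel (n m : ℕ) (φ : ClauseFun n m) :
    (Fin n × ClusterV m) → (Fin n × ClusterV m) → Prop := fun x y =>
  (∃ (i : Fin n) (a b : ClusterV m), clusterRel m a b ∧ x = (i, a) ∧ y = (i, b)) ∨
  (∃ (j : Fin m) (l : Fin 3),
    (x = ((φ j l).1, Sum.inr (gadgetIdx m j (φ j l).2, Sum.inl 1)) ∧
      y = ((φ j (l + 1)).1,
        Sum.inr (gadgetIdx m j (φ j (l + 1)).2, Sum.inl 7))) ∨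
    (x = ((φ j l).1, Sum.inr (gadgetIdx m j (φ j l).2, Sum.inl 2)) ∧
      y = ((φ j (l + 1)).1,
        Sum.inr (gadgetIdx m j (φ j (l + 1)).2, Sum.inr (Sum.inl 7)))) ∨
    (x = ((φ j l).1, Sum.inr (gadgetIdx m j (φ j l).2, Sum.inr (Sum.inl 1))) ∧
      y = ((φ j (l + 1)).1,
        Sum.inr (gadgetIdx m j (φ j (l + 1)).2, Sum.inl 8))))

/-- The graph `G_φ` of the reduction: one variable cluster per variable, combined via
the clause gadgets of the `m` clauses. -/
def Gphi (n m : ℕ) (φ : ClauseFun n m) :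
    SimpleGraph (Quotient (Relation.EqvGen.setoid (phiRel n m φ))) :=
  Glue (phiBase n m) (phiRel n m φ)

/-!
Every edge of `G_φ` comes from an edge of a building block, and hence lies in a triangle. For
uniqueness, suppose that `T` is a graph in which every edge lies in at most one triangle; then so
does every edge of a graph with a locally injective homomorphism to `T`. We label a vertex of `G_φ`
by its variable, its type up to identification (its *site*), and its position along the wire. The
vertices joined by clause gadgets belong to several clusters, so their label is the site alone.
The labels form a translation-invariant graph `T`, in which the uniqueness of triangles is a finite
check. The labels of the other vertices determine them, and two neighbours of a vertex that lie on
clause gadgets and have the same label coincide: the identifications of a clause gadget match whole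
triangles.
-/

section UniqueTriangles

variable {V W : Type*} {G : SimpleGraph V} {T : SimpleGraph W}

/-- Every edge lies in at most one triangle. -/
def AtMostOneTriangle (G : SimpleGraph V) : Prop :=
  ∀ ⦃a b c c' : V⦄, G.Adj a b → G.Adj a c → G.Adj b c → G.Adj a c' → G.Adj b c' → c = c'

theorem AtMostOneTriangle.of_locallyInjective (hT : AtMostOneTriangle T) (f : G →g T)
    (hf : ∀ a, Set.InjOn f (G.neighborSet a)) : AtMostOneTriangle G :=
  fun a _ _ _ hab hac hbc hac' hbc' =>
    hf a hac hac' (hT (f.map_adj hab) (f.map_adj hac) (f.map_adj hbc) (f.map_adj hac')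
      (f.map_adj hbc'))

end UniqueTriangles

instance {α β : Type*} [BEq α] [LawfulBEq α] [BEq β] [LawfulBEq β] : LawfulBEq (α ⊕ β) where
  rfl {x} := by
    rcases x with a | b
    · exact beq_self_eq_true a
    · exact beq_self_eq_true b
  eq_of_beq {x y} h := by
    rcases x with a | a <;> rcases y with b | b
    · exact congrArg Sum.inl (eq_of_beq (α := α) h)
    · cases h
    · cases h
    · exact congrArg Sum.inr (eq_of_beq (α := β) h)

/-- Neighbours of a vertex of the 7-sun. -/
def sunNeighbors : SunV → List SunV
  | Sum.inl i => [Sum.inl (i + 1), Sum.inl (i - 1), Sum.inr i, Sum.inr (i - 1)]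
  | Sum.inr i => [Sum.inl i, Sum.inl (i + 1)]

/-- Neighbours of a vertex of the binary-enforced 12-sun. -/
def binarySunNeighbors : BSV 12 → List (BSV 12)
  | Sum.inl i =>
    [Sum.inl (i + 1), Sum.inl (i - 1), Sum.inr (Sum.inl i), Sum.inr (Sum.inl (i - 1)),
      Sum.inr (Sum.inr (Sum.inl (i - 4, 0))), Sum.inr (Sum.inr (Sum.inl (i, 1))),
      Sum.inr (Sum.inr (Sum.inr (i - 4, 0))), Sum.inr (Sum.inr (Sum.inr (i, 2)))]
  | Sum.inr (Sum.inl i) => [Sum.inl i, Sum.inl (i + 1)]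
  | Sum.inr (Sum.inr (Sum.inl (i, 0))) =>
    [Sum.inl (i + 4), Sum.inr (Sum.inr (Sum.inl (i, 1))),
      Sum.inr (Sum.inr (Sum.inr (i, 0))), Sum.inr (Sum.inr (Sum.inr (i, 1)))]
  | Sum.inr (Sum.inr (Sum.inl (i, 1))) =>
    [Sum.inl i, Sum.inr (Sum.inr (Sum.inl (i, 0))),
      Sum.inr (Sum.inr (Sum.inr (i, 1))), Sum.inr (Sum.inr (Sum.inr (i, 2)))]
  | Sum.inr (Sum.inr (Sum.inr (i, 0))) => [Sum.inl (i + 4), Sum.inr (Sum.inr (Sum.inl (i, 0)))]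
  | Sum.inr (Sum.inr (Sum.inr (i, 1))) =>
    [Sum.inr (Sum.inr (Sum.inl (i, 0))), Sum.inr (Sum.inr (Sum.inl (i, 1)))]
  | Sum.inr (Sum.inr (Sum.inr (i, 2))) => [Sum.inr (Sum.inr (Sum.inl (i, 1))), Sum.inl i]

theorem not_mem_sunNeighbors_self : ∀ u, u ∉ sunNeighbors u := by decide +kernel

theorem not_mem_binarySunNeighbors_self : ∀ u, u ∉ binarySunNeighbors u := by decide +kernel

theorem sunGraph_adj_iff (u w : SunV) : (sunGraph 7).Adj u w ↔ w ∈ sunNeighbors u := by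
  simp only [sunGraph, SimpleGraph.fromRel_adj]
  constructor
  · rintro ⟨-, ⟨i, h⟩ | ⟨i, h⟩⟩
    · rcases h with ⟨rfl, rfl⟩ | ⟨rfl, rfl⟩ | ⟨rfl, rfl⟩ <;> simp [sunNeighbors]
    · rcases h with ⟨rfl, rfl⟩ | ⟨rfl, rfl⟩ | ⟨rfl, rfl⟩ <;> simp [sunNeighbors]
  · intro h
    refine ⟨fun huw => not_mem_sunNeighbors_self u (huw ▸ h), ?_⟩
    rcases u with i | i <;> simp only [sunNeighbors, List.mem_cons, List.not_mem_nil, or_false] at h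
    · rcases h with rfl | rfl | rfl | rfl
      · exact .inl ⟨i, by simp⟩
      · exact .inr ⟨i - 1, by simp⟩
      · exact .inr ⟨i, by simp⟩
      · exact .inr ⟨i - 1, by simp⟩
    · rcases h with rfl | rfl <;> exact .inl ⟨i, by simp⟩

theorem binarySun_adj_iff (u w : BSV 12) :
    (binarySun 12).Adj u w ↔ w ∈ binarySunNeighbors u := by
  simp only [binarySun, SimpleGraph.fromRel_adj]
  constructor
  · rintro ⟨-, ⟨i, h⟩ | ⟨i, h⟩⟩ <;>
    · rcases h with ⟨rfl, rfl⟩ | ⟨rfl, rfl | rfl⟩ | ⟨rfl, rfl⟩ | ⟨rfl, rfl⟩ | ⟨rfl, rfl⟩ |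
        ⟨rfl, rfl | rfl⟩ | ⟨rfl, rfl | rfl⟩ | ⟨rfl, rfl | rfl⟩ <;> simp [binarySunNeighbors]
  · intro h
    refine ⟨fun huw => not_mem_binarySunNeighbors_self u (huw ▸ h), ?_⟩
    rcases u with i | i | ⟨i, t⟩ | ⟨i, t⟩ <;> try fin_cases t
    all_goals
      simp only [binarySunNeighbors, List.mem_cons, List.not_mem_nil, or_false] at h
    · rcases h with rfl | rfl | rfl | rfl | rfl | rfl | rfl | rfl
      · exact .inl ⟨i, by simp⟩
      · exact .inr ⟨i - 1, by simp⟩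
      · exact .inr ⟨i, by simp⟩
      · exact .inr ⟨i - 1, by simp⟩
      · exact .inl ⟨i - 4, by simp⟩
      · exact .inr ⟨i, by simp⟩
      · exact .inr ⟨i - 4, by simp⟩
      · exact .inr ⟨i, by simp⟩
    · rcases h with rfl | rfl <;> exact .inl ⟨i, by simp⟩
    · rcases h with rfl | rfl | rfl | rfl
      · exact .inr ⟨i, by simp⟩
      · exact .inl ⟨i, by simp⟩
      · exact .inr ⟨i, by simp⟩
      · exact .inr ⟨i, by simp⟩
    · rcases h with rfl | rfl | rfl | rfl
      · exact .inl ⟨i, by simp⟩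
      · exact .inr ⟨i, by simp⟩
      · exact .inr ⟨i, by simp⟩
      · exact .inr ⟨i, by simp⟩
    all_goals rcases h with rfl | rfl <;> exact .inl ⟨i, by simp⟩

namespace Gphi

open Sum (inl inr)

variable {n m : ℕ}

/-- Vertices of the two building blocks, the 7-sun and the binary-enforced 12-sun. -/
abbrev LocalV : Type := SunV ⊕ BSV 12

-- Without this shortcut, instance search exceeds its size limit on `LocalV`.
instance : DecidableEq LocalV := instDecidableEqSum

/-- The disjoint union of the two building blocks. -/
def localGraph : SimpleGraph LocalV := sunGraph 7 ⊕g binarySun 12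

/-- Neighbours of a vertex of `localGraph`. -/
def localNeighbors : LocalV → List LocalV :=
  Sum.elim (fun u => (sunNeighbors u).map Sum.inl) fun u => (binarySunNeighbors u).map Sum.inr

theorem localGraph_adj_iff (u w : LocalV) : localGraph.Adj u w ↔ w ∈ localNeighbors u := by
  rcases u with u | u <;> rcases w with w | w <;>
    simp [localGraph, localNeighbors, sunGraph_adj_iff, binarySun_adj_iff]

theorem localGraph_exists_triangle {u w : LocalV} (h : localGraph.Adj u w) :
    ∃ z, localGraph.Adj u z ∧ localGraph.Adj w z := by
  have key : ∀ u, ∀ w ∈ localNeighbors u, ∃ z ∈ localNeighbors u, z ∈ localNeighbors w := by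
    decide +kernel
  simp only [localGraph_adj_iff] at h ⊢
  exact key u w h

/-- Each entry `(u, d, s)` says that the vertex `u` of a building block at position `p` of a
cluster is identified with the vertex `s` of a building block at position `p + d`. Here `H_{x,p}`
and `V_{x,p}` are both at position `p`. The groups of entries come from the NOT, EQUAL and clause
gadgets. A clause gadget leads to another cluster, so that its entries `d` are meaningless. The
vertex `q_{0,1}` is identified with `c₂` of its wire sun and then with `p₅` of the preceding one;
its entry combines both steps, so that no `s` occurs as a `u`. -/
def identifications : List (LocalV × ℤ × LocalV) :=
  [(inl (inl 1), -1, inl (inl 5)), (inl (inl 0), -1, inl (inl 4)),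
    (inl (inr 0), -1, inl (inr 4)), (inl (inl 2), -1, inl (inr 5)),
    (inl (inr 1), -1, inl (inl 6)),
    (inr (inr (inr (inl (0, 1)))), 0, inl (inl 3)),
    (inr (inr (inr (inr (0, 1)))), -1, inl (inr 5)),
    (inr (inr (inr (inl (0, 0)))), 0, inl (inr 2)),
    (inr (inr (inr (inr (0, 2)))), 0, inl (inl 4)), (inr (inl 0), 0, inl (inr 3)),
    (inr (inl 7), 0, inr (inl 1)), (inr (inr (inl 7)), 0, inr (inl 2)),
    (inr (inl 8), 0, inr (inr (inl 1)))]

/-- The vertex to which `identifications` reduces `u`. -/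
def site (u : LocalV) : LocalV := ((identifications.lookup u).map Prod.snd).getD u

/-- The position of `site u` relative to the building block of `u`. -/
def shift (u : LocalV) : ℤ := ((identifications.lookup u).map Prod.fst).getD 0

/-- The triangle `⟨a₁, a₂, a₃⟩` of the 12-sun by which the clause gadgets are attached. -/
def aTriangle : Fin 3 → BSV 12 := ![inl 1, inl 2, inr (inl 1)]

/-- The triangle `⟨b₁, b₃, b₂⟩` of the 12-sun, in the order in which a clause gadget identifies it
with the triangle `⟨a₁, a₂, a₃⟩` of another 12-sun. -/
def bTriangle : Fin 3 → BSV 12 := ![inl 7, inr (inl 7), inl 8]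

/-- A site to which clause gadgets attach. By `identifications`, the `a`-vertices represent the
`b`-vertices as well. -/
def IsPort (s : LocalV) : Prop := ∃ k, s = inr (aTriangle k)

instance : DecidablePred IsPort := fun s =>
  inferInstanceAs (Decidable (∃ k, s = inr (aTriangle k)))

/-- The vertices represented by the site `s`. -/
def fibre (s : LocalV) : List LocalV :=
  s :: (identifications.filter fun e => e.2.2 = s).map Prod.fst

theorem mem_fibre_site : ∀ u, u ∈ fibre (site u) := by decide +kernel

/-- The sites of the neighbours of the vertices represented by `s`, with relative positions. -/
def siteNeighbors (s : LocalV) : List (ℤ × LocalV) :=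
  (fibre s).flatMap fun u => (localNeighbors u).map fun w => (shift w - shift u, site w)

theorem mem_siteNeighbors {u w : LocalV} (h : localGraph.Adj u w) :
    (shift w - shift u, site w) ∈ siteNeighbors (site u) :=
  List.mem_flatMap.2 ⟨u, mem_fibre_site u,
    List.mem_map_of_mem (f := fun w => (shift w - shift u, site w)) ((localGraph_adj_iff u w).1 h)⟩

/-- The triples `(e, r, f)` such that `r` is a site adjacent to both ends of an edge from `s` to
`t`, where `d`, `e`, `f` are the relative positions along `s → t`, `s → r`, `t → r`. These only
have to add up if none of the three sites is a port, as ports have no position. -/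
def thirdSites (s : LocalV) (d : ℤ) (t : LocalV) : List (ℤ × LocalV × ℤ) :=
  (siteNeighbors s).flatMap fun (e, r) =>
    ((siteNeighbors t).filter fun (f, r') =>
      r' = r ∧ (IsPort s ∨ IsPort t ∨ IsPort r ∨ d + f = e)).map fun (f, _) => (e, r, f)

theorem mem_thirdSites {s t r : LocalV} {d e f : ℤ} (hs : (e, r) ∈ siteNeighbors s)
    (ht : (f, r) ∈ siteNeighbors t) (h : IsPort s ∨ IsPort t ∨ IsPort r ∨ d + f = e) :
    (e, r, f) ∈ thirdSites s d t := by
  simp only [thirdSites, List.mem_flatMap, List.mem_map, List.mem_filter, decide_eq_true_eq]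
  exact ⟨(e, r), hs, (f, r), ⟨ht, rfl, h⟩, rfl⟩

theorem thirdSites_unique : ∀ u, ∀ e ∈ siteNeighbors (site u),
    ∀ x ∈ thirdSites (site u) e.1 e.2, ∀ y ∈ thirdSites (site u) e.1 e.2, x = y := by
  decide +kernel

theorem isPort_of_mem_thirdSites : ∀ u, IsPort (site u) → ∀ e ∈ siteNeighbors (site u),
    IsPort e.2 → ∀ x ∈ thirdSites (site u) e.1 e.2, IsPort x.2.1 := by
  decide +kernel

theorem site_ne_of_adj {u w : LocalV} (h : localGraph.Adj u w) : site u ≠ site w := by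
  have key : ∀ u, ∀ w ∈ localNeighbors u, site u ≠ site w := by decide +kernel
  exact key u w ((localGraph_adj_iff u w).1 h)

/-- Labels of the vertices of `G_φ` in the template graph: a site, together with a variable and a
position unless the site is a port. -/
abbrev Label (n : ℕ) : Type := Option (Fin n × ℤ) × LocalV

/-- The label of the vertex `u` of a building block at position `p` in the cluster of `x`. -/
def label (x : Fin n) (p : ℤ) (u : LocalV) : Label n :=
  (if IsPort (site u) then none else some (x, p + shift u), site u)

theorem label_eq_label (x : Fin n) {p q k : ℤ} {u w : LocalV} (hs : site u = site w)
    (hk : shift u = shift w + k) (hp : p + k = q) : label x p u = label x q w := by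
  rw [label, label, hs, hk, ← hp, add_assoc, add_comm k]

theorem label_eq_label_of_isPort (x y : Fin n) (p q : ℤ) {u w : LocalV}
    (hs : site u = site w) (hw : IsPort (site w)) : label x p u = label y q w := by
  rw [label, label, hs, if_pos hw, if_pos hw]

theorem label_eq_label_iff {x y : Fin n} {p q : ℤ} {u w : LocalV}
    (hu : ¬ IsPort (site u)) :
    label x p u = label y q w ↔ x = y ∧ p + shift u = q + shift w ∧ site u = site w := by
  by_cases hw : IsPort (site w)
  · have hne : site u ≠ site w := fun h => hu (h ▸ hw)
    simp [label, hne]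
  · simp [label, hu, hw, and_assoc]

/-- The graph on labels whose edges are the edges of all building blocks, at all positions. -/
def templateGraph (n : ℕ) : SimpleGraph (Label n) where
  Adj α β := ∃ x p u w, localGraph.Adj u w ∧ α = label x p u ∧ β = label x p w
  symm := ⟨fun _ _ ⟨x, p, u, w, h, hα, hβ⟩ => ⟨x, p, w, u, h.symm, hβ, hα⟩⟩
  loopless := ⟨fun _ ⟨_, _, _, _, h, hα, hβ⟩ =>
    site_ne_of_adj h (congrArg Prod.snd (hα.symm.trans hβ))⟩

theorem templateGraph_adj_exists_site {α β : Label n} (h : (templateGraph n).Adj α β) :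
    ∃ u, site u = α.2 ∧ (α.1 = none ↔ IsPort α.2) := by
  obtain ⟨x, p, u, w, -, rfl, -⟩ := h
  exact ⟨u, rfl, by simp [label]⟩

/-- The label `β` lies `d` positions after `α`, if both have a position. -/
def Label.ShiftedBy (d : ℤ) (α β : Label n) : Prop :=
  ∀ x p y q, α.1 = some (x, p) → β.1 = some (y, q) → y = x ∧ q = p + d

theorem templateGraph_adj_exists_shift {α β : Label n}
    (h : (templateGraph n).Adj α β) :
    ∃ d, (d, β.2) ∈ siteNeighbors α.2 ∧ Label.ShiftedBy d α β := by
  obtain ⟨x, p, u, w, huw, rfl, rfl⟩ := h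
  refine ⟨_, mem_siteNeighbors huw, fun y q y' q' hα hβ => ?_⟩
  simp only [label, Option.ite_none_left_eq_some, Option.some.injEq, Prod.mk.injEq] at hα hβ
  exact ⟨hβ.2.1.symm.trans hα.2.1, by omega⟩

theorem templateGraph_exists_mem_thirdSites {α β γ : Label n} {d : ℤ}
    (hd : Label.ShiftedBy d α β) (hαγ : (templateGraph n).Adj α γ)
    (hβγ : (templateGraph n).Adj β γ) :
    ∃ e f, (e, γ.2, f) ∈ thirdSites α.2 d β.2 ∧
      Label.ShiftedBy e α γ ∧ Label.ShiftedBy f β γ := by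
  obtain ⟨-, -, hα⟩ := templateGraph_adj_exists_site hαγ
  obtain ⟨-, -, hβ⟩ := templateGraph_adj_exists_site hβγ
  obtain ⟨-, -, hγ⟩ := templateGraph_adj_exists_site hβγ.symm
  obtain ⟨e, he, hαγ⟩ := templateGraph_adj_exists_shift hαγ
  obtain ⟨f, hf, hβγ⟩ := templateGraph_adj_exists_shift hβγ
  refine ⟨e, f, mem_thirdSites he hf ?_, hαγ, hβγ⟩
  rw [← hα, ← hβ, ← hγ]
  by_contra! h
  obtain ⟨⟨x, p⟩, hp⟩ := Option.ne_none_iff_exists'.1 h.1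
  obtain ⟨⟨y, q⟩, hq⟩ := Option.ne_none_iff_exists'.1 h.2.1
  obtain ⟨⟨z, r⟩, hr⟩ := Option.ne_none_iff_exists'.1 h.2.2.1
  have := (hd _ _ _ _ hp hq).2
  have := (hαγ _ _ _ _ hp hr).2
  have := (hβγ _ _ _ _ hq hr).2
  exact h.2.2.2 (by omega)

theorem Label.ShiftedBy.eq {d : ℤ} {α β β' : Label n} (h : ShiftedBy d α β)
    (h' : ShiftedBy d α β') (hα : α.1 ≠ none) (hβ : β.1 ≠ none) (hβ' : β'.1 ≠ none) :
    β.1 = β'.1 := by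
  obtain ⟨⟨x, p⟩, hp⟩ := Option.ne_none_iff_exists'.1 hα
  obtain ⟨⟨y, q⟩, hq⟩ := Option.ne_none_iff_exists'.1 hβ
  obtain ⟨⟨z, r⟩, hr⟩ := Option.ne_none_iff_exists'.1 hβ'
  obtain ⟨rfl, rfl⟩ := h _ _ _ _ hp hq
  obtain ⟨rfl, rfl⟩ := h' _ _ _ _ hp hr
  rw [hq, hr]

theorem templateGraph_atMostOneTriangle (n : ℕ) : AtMostOneTriangle (templateGraph n) := by
  intro α β γ γ' hαβ hαγ hβγ hαγ' hβγ'
  obtain ⟨u, hu, hα⟩ := templateGraph_adj_exists_site hαβ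
  obtain ⟨-, -, hβ⟩ := templateGraph_adj_exists_site hβγ
  obtain ⟨-, -, hγ⟩ := templateGraph_adj_exists_site hβγ.symm
  obtain ⟨-, -, hγ'⟩ := templateGraph_adj_exists_site hβγ'.symm
  obtain ⟨d, hd, hαβ⟩ := templateGraph_adj_exists_shift hαβ
  obtain ⟨e, f, hef, he, hf⟩ := templateGraph_exists_mem_thirdSites hαβ hαγ hβγ
  obtain ⟨e', f', hef', he', hf'⟩ := templateGraph_exists_mem_thirdSites hαβ hαγ' hβγ'
  rw [← hu] at hd hef hef'
  have hunique := thirdSites_unique u _ hd _ hef _ hef'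
  simp only [Prod.mk.injEq] at hunique
  obtain ⟨rfl, hsite, rfl⟩ := hunique
  refine Prod.ext ?_ hsite
  rw [← hsite] at hγ'
  by_cases hport : IsPort γ.2
  · rw [hγ.2 hport, hγ'.2 hport]
  by_cases hportα : IsPort α.2
  · have hportβ : ¬ IsPort β.2 := fun hportβ =>
      hport (isPort_of_mem_thirdSites u (hu ▸ hportα) _ hd hportβ _ hef)
    exact hf.eq hf' (mt hβ.1 hportβ) (mt hγ.1 hport) (mt hγ'.1 hport)
  · exact he.eq he' (mt hα.1 hportα) (mt hγ.1 hport) (mt hγ'.1 hport)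

/-- The position in a cluster of the building block of a vertex: `V_{x,k}` has the same position
`k` as the wire sun `H_{x,k}` it is attached to. -/
def position : ClusterV m → ℤ
  | inl (i, _) => i
  | inr (j, _) => j + 1

/-- The vertex, within its building block. -/
def localVertex : ClusterV m → LocalV := Sum.map Prod.snd Prod.snd

theorem eq_of_position_eq_of_localVertex_eq {a b : ClusterV m}
    (hp : position a = position b) (hl : localVertex a = localVertex b) : a = b := by
  rcases a with ⟨i, u⟩ | ⟨j, u⟩ <;> rcases b with ⟨k, w⟩ | ⟨k, w⟩ <;>
    simp_all [position, localVertex, Fin.ext_iff]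

theorem clusterBase_adj_iff (a b : ClusterV m) :
    (clusterBase m).Adj a b ↔
      position a = position b ∧ localGraph.Adj (localVertex a) (localVertex b) := by
  constructor
  · rintro ⟨-, (⟨i, u, w, h, rfl, rfl⟩ | ⟨j, u, w, h, rfl, rfl⟩) |
      (⟨i, u, w, h, rfl, rfl⟩ | ⟨j, u, w, h, rfl, rfl⟩)⟩ <;>
      simp [position, localVertex, localGraph, h, h.symm]
  · rintro ⟨hp, h⟩
    refine ⟨fun hab => h.ne (congrArg localVertex hab), .inl ?_⟩
    rcases a with ⟨i, u⟩ | ⟨j, u⟩ <;> rcases b with ⟨k, w⟩ | ⟨k, w⟩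
    · obtain rfl : i = k := by simpa [position, Fin.ext_iff] using hp
      exact .inl ⟨i, u, w, by simpa [localVertex, localGraph] using h, rfl, rfl⟩
    · simp [localVertex, localGraph] at h
    · simp [localVertex, localGraph] at h
    · obtain rfl : j = k := by simpa [position, Fin.ext_iff] using hp
      exact .inr ⟨j, u, w, by simpa [localVertex, localGraph] using h, rfl, rfl⟩

theorem phiBase_adj_iff (a b : Fin n × ClusterV m) :
    (phiBase n m).Adj a b ↔ a.1 = b.1 ∧ position a.2 = position b.2 ∧
      localGraph.Adj (localVertex a.2) (localVertex b.2) := by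
  rw [phiBase, SimpleGraph.fromRel_adj, clusterBase_adj_iff, clusterBase_adj_iff]
  refine ⟨?_, fun h => ⟨fun hab => h.2.2.ne (by rw [hab]), .inl h⟩⟩
  rintro ⟨-, h | h⟩
  · exact h
  · exact ⟨h.1.symm, h.2.1.symm, h.2.2.symm⟩

theorem phiBase_exists_triangle {a b : Fin n × ClusterV m}
    (h : (phiBase n m).Adj a b) : ∃ c, (phiBase n m).Adj a c ∧ (phiBase n m).Adj b c := by
  simp only [phiBase_adj_iff] at h ⊢
  obtain ⟨hx, hp, h⟩ := h
  obtain ⟨z, haz, hbz⟩ := localGraph_exists_triangle h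
  suffices ∃ c : ClusterV m, position c = position a.2 ∧ localVertex c = z by
    obtain ⟨c, hc, rfl⟩ := this
    exact ⟨(a.1, c), ⟨rfl, hc.symm, haz⟩, hx.symm, hp.symm.trans hc.symm, hbz⟩
  obtain ⟨x, ⟨i, u⟩ | ⟨j, u⟩⟩ := a <;> rcases z with z | z
  · exact ⟨inl (i, z), rfl, rfl⟩
  · simp [localVertex, localGraph] at haz
  · simp [localVertex, localGraph] at haz
  · exact ⟨inr (j, z), rfl, rfl⟩

/-- The label of a vertex of the disjoint union of the variable clusters. -/
def vertexLabel (a : Fin n × ClusterV m) : Label n :=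
  label a.1 (position a.2) (localVertex a.2)

theorem templateGraph_adj_vertexLabel {a b : Fin n × ClusterV m}
    (h : (phiBase n m).Adj a b) : (templateGraph n).Adj (vertexLabel a) (vertexLabel b) := by
  obtain ⟨hx, hp, h⟩ := (phiBase_adj_iff a b).1 h
  exact ⟨a.1, position a.2, _, _, h, rfl, by rw [vertexLabel, hx, hp]⟩

theorem vertexLabel_eq_of_clusterRel (x : Fin n) {a b : ClusterV m}
    (h : clusterRel m a b) : vertexLabel (x, a) = vertexLabel (x, b) := by
  rcases h with ⟨i, h⟩ | ⟨j, h⟩ <;>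
    rcases h with ⟨rfl, rfl⟩ | ⟨rfl, rfl⟩ | ⟨rfl, rfl⟩ | ⟨rfl, rfl⟩ | ⟨rfl, rfl⟩
  iterate 5 exact label_eq_label x (k := 1) rfl rfl (by simp [position])
  iterate 5 exact label_eq_label x (k := 0) rfl rfl (by simp [position])

theorem vertexLabel_eq_of_phiRel {φ : ClauseFun n m} {a b : Fin n × ClusterV m}
    (h : phiRel n m φ a b) : vertexLabel a = vertexLabel b := by
  rcases h with ⟨x, a, b, h, rfl, rfl⟩ | ⟨j, l, ⟨rfl, rfl⟩ | ⟨rfl, rfl⟩ | ⟨rfl, rfl⟩⟩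
  · exact vertexLabel_eq_of_clusterRel x h
  · exact label_eq_label_of_isPort _ _ _ _ rfl ⟨0, rfl⟩
  · exact label_eq_label_of_isPort _ _ _ _ rfl ⟨1, rfl⟩
  · exact label_eq_label_of_isPort _ _ _ _ rfl ⟨2, rfl⟩

theorem vertexLabel_eq_of_eqvGen {φ : ClauseFun n m} {a b : Fin n × ClusterV m}
    (h : Relation.EqvGen (phiRel n m φ) a b) : vertexLabel a = vertexLabel b := by
  induction h with
  | rel _ _ h => exact vertexLabel_eq_of_phiRel h
  | refl => rfl
  | symm _ _ _ ih => exact ih.symm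
  | trans _ _ _ _ _ ih ih' => exact ih.trans ih'

/-- The bowtie by which a wire sun is attached to its predecessor. -/
def rootBowtie : List SunV := [inl 1, inl 0, inr 0, inl 2, inr 1]

/-- The bowtie by which a large variable gadget is attached to its wire sun. -/
def gadgetBowtie : List (BSV 12) :=
  [inr (inr (inl (0, 1))), inr (inr (inr (0, 1))), inr (inr (inl (0, 0))),
    inr (inr (inr (0, 2))), inl 0]

/-- A vertex that is not identified with one at a lower position of its cluster: either its own
site, or in the root bowtie of the first wire sun. -/
def IsLowest (a : Fin n × ClusterV m) : Prop :=
  site (localVertex a.2) = localVertex a.2 ∨ ∃ u ∈ rootBowtie, a.2 = inl (0, u)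

theorem exists_isLowest_wire (φ : ClauseFun n m) (x : Fin n) (i : Fin (2 * m + 1))
    (u : SunV) : ∃ b, Relation.EqvGen (phiRel n m φ) (x, inl (i, u)) b ∧ IsLowest b := by
  have site_eq : ∀ u, u ∉ rootBowtie → site (inl u) = inl u := by decide +kernel
  by_cases hu : u ∈ rootBowtie
  · refine Fin.cases ⟨_, .refl _, .inr ⟨u, hu, rfl⟩⟩ (fun i => ?_) i
    have reduce {w : SunV} (hw : w ∉ rootBowtie)
        (h : clusterRel m (inl (i.castSucc, w)) (inl (i.succ, u))) :
        ∃ b, Relation.EqvGen (phiRel n m φ) (x, inl (i.succ, u)) b ∧ IsLowest b :=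
      ⟨_, .symm _ _ (.rel _ _ (.inl ⟨x, _, _, h, rfl, rfl⟩)), .inl (site_eq w hw)⟩
    simp only [rootBowtie, List.mem_cons, List.not_mem_nil, or_false] at hu
    rcases hu with rfl | rfl | rfl | rfl | rfl
    · exact reduce (by decide) (.inl ⟨i, .inl ⟨rfl, rfl⟩⟩)
    · exact reduce (by decide) (.inl ⟨i, .inr (.inl ⟨rfl, rfl⟩)⟩)
    · exact reduce (by decide) (.inl ⟨i, .inr (.inr (.inl ⟨rfl, rfl⟩))⟩)
    · exact reduce (by decide) (.inl ⟨i, .inr (.inr (.inr (.inl ⟨rfl, rfl⟩)))⟩)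
    · exact reduce (by decide) (.inl ⟨i, .inr (.inr (.inr (.inr ⟨rfl, rfl⟩)))⟩)
  · exact ⟨_, .refl _, .inl (site_eq u hu)⟩

theorem exists_isLowest (φ : ClauseFun n m) (a : Fin n × ClusterV m)
    (ha : ¬ IsPort (site (localVertex a.2))) :
    ∃ b, Relation.EqvGen (phiRel n m φ) a b ∧ IsLowest b := by
  have site_eq : ∀ u, ¬ IsPort (site (inr u)) → u ∉ gadgetBowtie → site (inr u) = inr u := by
    decide +kernel
  obtain ⟨x, ⟨i, u⟩ | ⟨j, u⟩⟩ := a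
  · exact exists_isLowest_wire φ x i u
  by_cases hu : u ∈ gadgetBowtie
  · have reduce {w : SunV} (h : clusterRel m (inl (j.succ, w)) (inr (j, u))) :
        ∃ b, Relation.EqvGen (phiRel n m φ) (x, inr (j, u)) b ∧ IsLowest b := by
      obtain ⟨b, hwb, hb⟩ := exists_isLowest_wire φ x j.succ w
      exact ⟨b, .trans _ _ _ (.symm _ _ (.rel _ _ (.inl ⟨x, _, _, h, rfl, rfl⟩))) hwb, hb⟩
    simp only [gadgetBowtie, List.mem_cons, List.not_mem_nil, or_false] at hu
    rcases hu with rfl | rfl | rfl | rfl | rfl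
    · exact reduce (.inr ⟨j, .inl ⟨rfl, rfl⟩⟩)
    · exact reduce (.inr ⟨j, .inr (.inl ⟨rfl, rfl⟩)⟩)
    · exact reduce (.inr ⟨j, .inr (.inr (.inl ⟨rfl, rfl⟩))⟩)
    · exact reduce (.inr ⟨j, .inr (.inr (.inr (.inl ⟨rfl, rfl⟩)))⟩)
    · exact reduce (.inr ⟨j, .inr (.inr (.inr (.inr ⟨rfl, rfl⟩)))⟩)
  · exact ⟨_, .refl _, .inl (site_eq u ha hu)⟩

theorem position_nonneg (a : ClusterV m) : 0 ≤ position a := by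
  rcases a with ⟨i, u⟩ | ⟨j, u⟩ <;> simp only [position] <;> omega

theorem IsLowest.eq_of_vertexLabel_eq {a b : Fin n × ClusterV m} (ha : IsLowest a)
    (hb : IsLowest b) (hport : ¬ IsPort (site (localVertex a.2)))
    (h : vertexLabel a = vertexLabel b) : a = b := by
  have shift_site : ∀ u, site u = u → shift u = 0 := by decide +kernel
  have shift_root : ∀ u ∈ rootBowtie, shift (inl u) = -1 := by decide +kernel
  have level_nonneg {c : ClusterV m} (hc : site (localVertex c) = localVertex c) :
      0 ≤ position c + shift (localVertex c) := by
    rw [shift_site _ hc, add_zero]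
    exact position_nonneg c
  have level_root (u) (hu : u ∈ rootBowtie) :
      position (inl (0, u) : ClusterV m) + shift (inl u) = -1 := by
    simp [position, shift_root u hu]
  have site_root : ∀ u ∈ rootBowtie, ∀ w ∈ rootBowtie, site (inl u) = site (inl w) → u = w := by
    decide +kernel
  obtain ⟨hx, hp, hs⟩ := (label_eq_label_iff hport).1 h
  refine Prod.ext hx ?_
  obtain ⟨x, a⟩ := a
  obtain ⟨y, b⟩ := b
  rcases ha with ha | ⟨u, hu, rfl : a = _⟩ <;> rcases hb with hb | ⟨w, hw, rfl : b = _⟩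
  · refine eq_of_position_eq_of_localVertex_eq ?_ (ha.symm.trans (hs.trans hb))
    simpa [shift_site _ ha, shift_site _ hb] using hp
  · have : position a + shift (localVertex a) = -1 := hp.trans (level_root w hw)
    exact absurd (level_nonneg (c := a) ha) (by omega)
  · have : position b + shift (localVertex b) = -1 := hp.symm.trans (level_root u hu)
    exact absurd (level_nonneg (c := b) hb) (by omega)
  · rw [site_root u hu w hw hs]

theorem eqvGen_of_vertexLabel_eq {φ : ClauseFun n m} {a b : Fin n × ClusterV m}
    (hport : ¬ IsPort (site (localVertex a.2))) (h : vertexLabel a = vertexLabel b) :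
    Relation.EqvGen (phiRel n m φ) a b := by
  have hsite {c d : Fin n × ClusterV m} (h : vertexLabel c = vertexLabel d) :
      site (localVertex c.2) = site (localVertex d.2) := congrArg Prod.snd h
  obtain ⟨a', haa', ha'⟩ := exists_isLowest φ a hport
  obtain ⟨b', hbb', hb'⟩ := exists_isLowest φ b (hsite h ▸ hport)
  have hlabel := vertexLabel_eq_of_eqvGen haa'
  obtain rfl : a' = b' := ha'.eq_of_vertexLabel_eq hb' (hsite hlabel ▸ hport)
    (hlabel.symm.trans (h.trans (vertexLabel_eq_of_eqvGen hbb')))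
  exact haa'.trans _ _ _ hbb'.symm

/-- Moves the vertices of the `a`-triangle and of the `b`-triangle to the `k`-th vertex of their
triangle and fixes all other vertices. -/
def slidePort (k : Fin 3) (u : BSV 12) : BSV 12 :=
  if ∃ l, u = aTriangle l then aTriangle k
  else if ∃ l, u = bTriangle l then bTriangle k
  else u

/-- `slidePort` in all large variable gadgets. -/
def slide (k : Fin 3) : Fin n × ClusterV m → Fin n × ClusterV m :=
  Prod.map id (Sum.map id (Prod.map id (slidePort k)))

theorem position_slide (k : Fin 3) (a : Fin n × ClusterV m) :
    position (slide k a).2 = position a.2 := by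
  obtain ⟨x, ⟨i, u⟩ | ⟨j, u⟩⟩ := a <;> rfl

theorem localVertex_slide (k : Fin 3) (a : Fin n × ClusterV m) :
    localVertex (slide k a).2 = Sum.map id (slidePort k) (localVertex a.2) := by
  obtain ⟨x, ⟨i, u⟩ | ⟨j, u⟩⟩ := a <;> rfl

theorem slide_eq_self_of_clusterRel (k : Fin 3) (x : Fin n) {a b : ClusterV m}
    (h : clusterRel m a b) : slide k (x, a) = (x, a) ∧ slide k (x, b) = (x, b) := by
  have slide_wire (i u) : slide k (x, (inl (i, u) : ClusterV m)) = (x, inl (i, u)) := rfl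
  have slide_gadget (j) {u} (hu : u ∈ gadgetBowtie) :
      slide k (x, (inr (j, u) : ClusterV m)) = (x, inr (j, u)) := by
    have key : ∀ k, ∀ u ∈ gadgetBowtie, slidePort k u = u := by decide +kernel
    simp [slide, key k u hu]
  rcases h with ⟨i, h⟩ | ⟨j, h⟩ <;>
    rcases h with ⟨rfl, rfl⟩ | ⟨rfl, rfl⟩ | ⟨rfl, rfl⟩ | ⟨rfl, rfl⟩ | ⟨rfl, rfl⟩
  iterate 5 exact ⟨slide_wire _ _, slide_wire _ _⟩
  iterate 5 exact ⟨slide_wire _ _, slide_gadget _ (by decide)⟩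

theorem phiRel_aTriangle_bTriangle (φ : ClauseFun n m) (j : Fin m) (l k : Fin 3) :
    phiRel n m φ ((φ j l).1, inr (gadgetIdx m j (φ j l).2, aTriangle k))
      ((φ j (l + 1)).1, inr (gadgetIdx m j (φ j (l + 1)).2, bTriangle k)) := by
  refine .inr ⟨j, l, ?_⟩
  fin_cases k
  · exact .inl ⟨rfl, rfl⟩
  · exact .inr (.inl ⟨rfl, rfl⟩)
  · exact .inr (.inr ⟨rfl, rfl⟩)

theorem phiRel_slide {φ : ClauseFun n m} {a b : Fin n × ClusterV m} (k : Fin 3)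
    (h : phiRel n m φ a b) : phiRel n m φ (slide k a) (slide k b) := by
  have ha : ∀ k l, slidePort k (aTriangle l) = aTriangle k := by decide +kernel
  have hb : ∀ k l, slidePort k (bTriangle l) = bTriangle k := by decide +kernel
  rcases h with ⟨x, a, b, h, rfl, rfl⟩ | ⟨j, l, h⟩
  · obtain ⟨ha, hb⟩ := slide_eq_self_of_clusterRel k x h
    rw [ha, hb]
    exact .inl ⟨x, a, b, h, rfl, rfl⟩
  · obtain ⟨i, rfl, rfl⟩ : ∃ i, a = ((φ j l).1, inr (gadgetIdx m j (φ j l).2, aTriangle i)) ∧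
        b = ((φ j (l + 1)).1, inr (gadgetIdx m j (φ j (l + 1)).2, bTriangle i)) := by
      rcases h with h | h | h
      exacts [⟨0, h⟩, ⟨1, h⟩, ⟨2, h⟩]
    simpa [slide, ha, hb] using phiRel_aTriangle_bTriangle φ j l k

theorem eqvGen_slide {φ : ClauseFun n m} {a b : Fin n × ClusterV m} (k : Fin 3)
    (h : Relation.EqvGen (phiRel n m φ) a b) :
    Relation.EqvGen (phiRel n m φ) (slide k a) (slide k b) := by
  induction h with
  | rel _ _ h => exact .rel _ _ (phiRel_slide k h)
  | refl => exact .refl _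
  | symm _ _ _ ih => exact ih.symm
  | trans _ _ _ _ _ ih ih' => exact ih.trans _ _ _ ih'

theorem eq_slide_of_adj {a c : Fin n × ClusterV m} {k : Fin 3}
    (h : (phiBase n m).Adj a c) (ha : IsPort (site (localVertex a.2)))
    (hc : site (localVertex c.2) = inr (aTriangle k)) : c = slide k a := by
  have key : ∀ u, IsPort (site u) → ∀ w ∈ localNeighbors u, ∀ k, site w = inr (aTriangle k) →
      w = Sum.map id (slidePort k) u := by decide +kernel
  obtain ⟨hx, hp, h⟩ := (phiBase_adj_iff a c).1 h
  refine Prod.ext hx.symm (eq_of_position_eq_of_localVertex_eq ?_ ?_)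
  · rw [position_slide, hp]
  · rw [localVertex_slide]
    exact key _ ha _ ((localGraph_adj_iff _ _).1 h) k hc

theorem eq_of_adj_port {a a' c c' : Fin n × ClusterV m}
    (h : (phiBase n m).Adj a c) (h' : (phiBase n m).Adj a' c')
    (hport : ¬ IsPort (site (localVertex a.2))) (hc : IsPort (site (localVertex c.2)))
    (hlabel : vertexLabel a = vertexLabel a')
    (hsite : site (localVertex c.2) = site (localVertex c'.2)) : c = c' := by
  have key : ∀ u, ¬ IsPort (site u) → ∀ w ∈ localNeighbors u, IsPort (site w) →
      ∀ u', site u = site u' → ∀ w' ∈ localNeighbors u', site w = site w' → u = u' ∧ w = w' := by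
    decide +kernel
  obtain ⟨hx, hp, h⟩ := (phiBase_adj_iff a c).1 h
  obtain ⟨hx', hp', h'⟩ := (phiBase_adj_iff a' c').1 h'
  obtain ⟨hxx', hpp', hss'⟩ := (label_eq_label_iff hport).1 hlabel
  obtain ⟨hu, hw⟩ := key _ hport _ ((localGraph_adj_iff _ _).1 h) hc _ hss' _
    ((localGraph_adj_iff _ _).1 h') hsite
  rw [hu, add_left_inj] at hpp'
  exact Prod.ext (hx.symm.trans (hxx'.trans hx'))
    (eq_of_position_eq_of_localVertex_eq (hp.symm.trans (hpp'.trans hp')) hw)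

theorem eqvGen_of_adj_of_vertexLabel_eq {φ : ClauseFun n m}
    {a a' c c' : Fin n × ClusterV m} (haa' : Relation.EqvGen (phiRel n m φ) a a')
    (h : (phiBase n m).Adj a c) (h' : (phiBase n m).Adj a' c')
    (hlabel : vertexLabel c = vertexLabel c') : Relation.EqvGen (phiRel n m φ) c c' := by
  by_cases hc : IsPort (site (localVertex c.2))
  · have hsite : site (localVertex c.2) = site (localVertex c'.2) := congrArg Prod.snd hlabel
    have hlabel' := vertexLabel_eq_of_eqvGen haa'
    by_cases ha : IsPort (site (localVertex a.2))
    · have hsite' : site (localVertex a.2) = site (localVertex a'.2) :=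
        congrArg Prod.snd hlabel'
      obtain ⟨k, hk⟩ := hc
      rw [eq_slide_of_adj h ha hk, eq_slide_of_adj h' (hsite' ▸ ha) (hsite.symm.trans hk)]
      exact eqvGen_slide k haa'
    · rw [eq_of_adj_port h h' ha hc hlabel' hsite]
      exact .refl _
  · exact eqvGen_of_vertexLabel_eq hc hlabel

theorem adj_iff_exists_phiBase_adj {φ : ClauseFun n m}
    (X Y : Quotient (Relation.EqvGen.setoid (phiRel n m φ))) :
    (Gphi n m φ).Adj X Y ↔
      ∃ a b, (phiBase n m).Adj a b ∧ X = Quotient.mk _ a ∧ Y = Quotient.mk _ b := by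
  rw [Gphi, Glue, SimpleGraph.fromRel_adj]
  constructor
  · rintro ⟨-, h | ⟨b, a, h, hY, hX⟩⟩
    · exact h
    · exact ⟨a, b, h.symm, hX, hY⟩
  · intro h
    refine ⟨?_, .inl h⟩
    obtain ⟨a, b, h, rfl, rfl⟩ := h
    exact fun hab => (templateGraph_adj_vertexLabel h).ne
      (vertexLabel_eq_of_eqvGen (Quotient.exact hab))

/-- The homomorphism from `G_φ` to the template graph that labels the vertices of `G_φ`. -/
def templateHom (φ : ClauseFun n m) : Gphi n m φ →g templateGraph n where
  toFun := Quotient.lift vertexLabel fun _ _ => vertexLabel_eq_of_eqvGen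
  map_rel' {X Y} h := by
    obtain ⟨a, b, hab, rfl, rfl⟩ := (adj_iff_exists_phiBase_adj X Y).1 h
    exact templateGraph_adj_vertexLabel hab

theorem templateHom_injOn_neighborSet (φ : ClauseFun n m)
    (X : Quotient (Relation.EqvGen.setoid (phiRel n m φ))) :
    Set.InjOn (templateHom φ) ((Gphi n m φ).neighborSet X) := by
  intro Y hY Z hZ hYZ
  obtain ⟨a, c, h, rfl, rfl⟩ := (adj_iff_exists_phiBase_adj X Y).1 hY
  obtain ⟨a', c', h', haa', rfl⟩ := (adj_iff_exists_phiBase_adj _ Z).1 hZ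
  exact Quotient.sound (eqvGen_of_adj_of_vertexLabel_eq (Quotient.exact haa') h h' hYZ)

theorem exists_triangle {φ : ClauseFun n m}
    {X Y : Quotient (Relation.EqvGen.setoid (phiRel n m φ))} (h : (Gphi n m φ).Adj X Y) :
    ∃ Z, (Gphi n m φ).Adj X Z ∧ (Gphi n m φ).Adj Y Z := by
  simp only [adj_iff_exists_phiBase_adj] at h ⊢
  obtain ⟨a, b, h, rfl, rfl⟩ := h
  obtain ⟨c, hac, hbc⟩ := phiBase_exists_triangle h
  exact ⟨_, ⟨a, c, hac, rfl, rfl⟩, b, c, hbc, rfl, rfl⟩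

end Gphi

theorem Gphi_edges_in_unique_triangle_general (n m : ℕ) (φ : ClauseFun n m) :
    ∀ a b, (Gphi n m φ).Adj a b →
      ∃! c, (Gphi n m φ).Adj a c ∧ (Gphi n m φ).Adj b c := by
  intro a b hab
  have hunique : AtMostOneTriangle (Gphi n m φ) :=
    (Gphi.templateGraph_atMostOneTriangle n).of_locallyInjective (Gphi.templateHom φ)
      (Gphi.templateHom_injOn_neighborSet φ)
  obtain ⟨c, hac, hbc⟩ := Gphi.exists_triangle hab
  exact ⟨c, ⟨hac, hbc⟩, fun c' h => hunique hab h.1 h.2 hac hbc⟩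

/-- Every edge of `G_φ` lies in exactly one triangle of `G_φ`. -/
theorem Gphi_edges_in_unique_triangle (n m : ℕ) (φ : ClauseFun n m)
    (hdist : ∀ (j : Fin m) (l l' : Fin 3), l ≠ l' → (φ j l).1 ≠ (φ j l').1) :
    ∀ a b, (Gphi n m φ).Adj a b →
      ∃! c, (Gphi n m φ).Adj a c ∧ (Gphi n m φ).Adj b c :=
  Gphi_edges_in_unique_triangle_general n m φ
end
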